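/- Let K ⊂ L ⊂ M be a tower of finite extensions of ℚ_p such that M/K and L/K are Galois. Suppose M/L has ramification jumps t₁ < ... < t_n (in lower numbering), and L/K has a unique ramification jump t with t < t₁. Then the ramification jumps of M/K are exactly t, t₁, ..., t_n, and for every j ≥ t+1 the lower ramification group Gal(M/K)_j equals Gal(M/L)_j. -/

import Mathlib

/-- The `ℤ_[p]`-algebra structure on a field `L` over `ℚ_[p]`. -/
noncomputable def padicIntAlgebra (p : ℕ) [Fact p.Prime] (L : Type*) [Field L]
    [Algebra ℚ_[p] L] : Algebra ℤ_[p] L :=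
  ((algebraMap ℚ_[p] L).comp (algebraMap ℤ_[p] ℚ_[p])).toAlgebra

/-- The ring of integers of a `p`-adic field `L`, i.e. the integral closure of `ℤ_[p]` in `L`. -/
noncomputable def ringOfInt (p : ℕ) [Fact p.Prime] (L : Type*) [Field L]
    [Algebra ℚ_[p] L] : Subring L :=
  letI := padicIntAlgebra p L
  (integralClosure ℤ_[p] L).toSubring

/-- The maximal ideal of the ring of integers of `L` (its Jacobson radical). -/
noncomputable def maxIdeal (p : ℕ) [Fact p.Prime] (L : Type*) [Field L]
    [Algebra ℚ_[p] L] : Ideal (ringOfInt p L) :=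
  (⊥ : Ideal (ringOfInt p L)).jacobson

/-- The `i`-th ramification group (in lower numbering) of `L/K`, as a subset of `Gal(L/K)`:
`σ ∈ G_i` iff `σ x - x ∈ 𝔭_L ^ (i+1)` for every `x` in the ring of integers of `L`. -/
noncomputable def ramSet (p : ℕ) [Fact p.Prime] (K L : Type*) [Field K] [Field L]
    [Algebra ℚ_[p] L] [Algebra K L] (i : ℕ) : Set (L ≃ₐ[K] L) :=
  {σ | ∀ x : ringOfInt p L, ∃ y ∈ maxIdeal p L ^ (i + 1), (y : L) = σ (x : L) - (x : L)}

/-- `t` is a ramification jump of `L/K` if `G_t ≠ G_{t+1}`. -/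
noncomputable def IsRamJump (p : ℕ) [Fact p.Prime] (K L : Type*) [Field K] [Field L]
    [Algebra ℚ_[p] L] [Algebra K L] (t : ℕ) : Prop :=
  ramSet p K L t ≠ ramSet p K L (t + 1)

/-- `L/K` has a unique ramification jump, equal to `t`. -/
noncomputable def HasUniqueRamJump (p : ℕ) [Fact p.Prime] (K L : Type*) [Field K] [Field L]
    [Algebra ℚ_[p] L] [Algebra K L] (t : ℕ) : Prop :=
  IsRamJump p K L t ∧ ∀ t', IsRamJump p K L t' → t' = t

/-- Same as `HasUniqueRamJump`, with the `K`-algebra structure on `L` given by an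
explicit ring homomorphism. -/
noncomputable def HasUniqueRamJumpHom (p : ℕ) [Fact p.Prime] (K L : Type*) [Field K] [Field L]
    [Algebra ℚ_[p] L] (f : K →+* L) (t : ℕ) : Prop :=
  letI := f.toAlgebra
  HasUniqueRamJump p K L t

/-- The absolute ramification index `e(L|ℚ_p)`, i.e. the valuation of `p` in `L`. -/
noncomputable def eAbs (p : ℕ) [Fact p.Prime] (L : Type*) [Field L] [Algebra ℚ_[p] L] : ℕ :=
  sSup {n : ℕ | Ideal.span {(p : ringOfInt p L)} ≤ maxIdeal p L ^ n}

/-- The normalized valuation `v_L(x)` of an integral element `x` of `L`. -/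
noncomputable def valInt (p : ℕ) [Fact p.Prime] (L : Type*) [Field L] [Algebra ℚ_[p] L]
    (x : L) : ℕ :=
  sSup {n : ℕ | ∃ y ∈ maxIdeal p L ^ n, (y : L) = x}

/-!
Let `A ⊆ B ⊆ C` be the rings of integers of the tower, and let `x` generate `C` over `A`. Let `G`,
`Q`, `H` be the Galois groups of `C/A`, `B/A`, `C/B`; the inertia group `H₀` has order `e = e(C/B)`.

For `g ∈ G` with image `q ∈ Q`, put `π = ∏ h : H, (g x - h x)`. If `f` is the characteristic
polynomial of `x` over `B`, then `π = f (g x) = (f - f^q) (g x)`. If `b ∈ B` is `F x` with `F` a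
polynomial over `A`, all `h x` are roots of `F - b`, so `π` divides `F (g x) - b = q b - b`.
Hence `q ∈ Q_i` iff `π` has valuation at least `e * (i + 1)`. If `H₀ = H_i` and `g ∈ G₀`, then
`π` is, up to a unit, the product of the `e` factors `g x - h x` with `h ∈ H₀`, each congruent to
`g x - x` modulo the `(i + 1)`-st power of the maximal ideal, so that `q ∈ Q_i` iff `g ∈ G_i`.

Since the jumps of `H` exceed `t`, this shows that `G_i` maps onto `Q_i` for `i ≤ t + 1`, which
settles the jumps up to `t`. As `Q_{t+1} = 1`, the group `G_j` lies in `H`, and so equals `H_j`, for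
every `j ≥ t + 1`.
-/

section Monogenic

open IsLocalRing Polynomial

variable {A C : Type*} [CommRing A] [CommRing C] [Algebra A C]

theorem exists_mem_subalgebra_sub_mem_maximalIdeal_pow [IsDomain C] [IsDiscreteValuationRing C]
    {S : Subalgebra A C} (hS : ∀ c, ∃ s ∈ S, c - s ∈ maximalIdeal C) {ϖ : C} (hϖ : Irreducible ϖ)
    (hϖS : ϖ ∈ S) (n : ℕ) (c : C) : ∃ s ∈ S, c - s ∈ maximalIdeal C ^ n := by
  induction n with
  | zero => exact ⟨0, zero_mem S, by simp⟩
  | succ n ih =>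
    obtain ⟨s, hs, h⟩ := ih
    rw [hϖ.maximalIdeal_eq, Ideal.span_singleton_pow, Ideal.mem_span_singleton] at h
    obtain ⟨d, hd⟩ := h
    obtain ⟨r, hr, hdr⟩ := hS d
    refine ⟨s + ϖ ^ n * r, add_mem hs (mul_mem (pow_mem hϖS n) hr), ?_⟩
    rw [← sub_sub, hd, ← mul_sub, pow_succ]
    exact Ideal.mul_mem_mul
      (Ideal.pow_mem_pow ((mem_maximalIdeal _).2 hϖ.not_isUnit) n) hdr

-- By Taylor's formula `f (x₀ + ϖ) ≡ f x₀ + ϖ * f' x₀` modulo `ϖ ^ 2`,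
-- so `f x₀` and `f (x₀ + ϖ)` cannot both be divisible by `ϖ ^ 2`.
theorem exists_residue_eq_and_irreducible_aeval [IsDomain C] [IsDiscreteValuationRing C]
    {f : A[X]} {x₀ : C}
    (h₀ : residue C (aeval x₀ f) = 0) (h₁ : residue C (aeval x₀ (derivative f)) ≠ 0) :
    ∃ x, residue C x = residue C x₀ ∧ Irreducible (aeval x f) := by
  obtain ⟨ϖ, hϖ⟩ := IsDiscreteValuationRing.exists_irreducible C
  have hϖ₀ : residue C ϖ = 0 := (residue_eq_zero_iff ϖ).2 ((mem_maximalIdeal ϖ).2 hϖ.not_isUnit)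
  obtain ⟨z, hz⟩ : ϖ ∣ aeval x₀ f := by
    rwa [← Ideal.mem_span_singleton, ← hϖ.maximalIdeal_eq, ← residue_eq_zero_iff]
  have hirr (u : C) (hu : residue C u ≠ 0) : Irreducible (ϖ * u) :=
    (associated_mul_unit_right ϖ u ((residue_ne_zero_iff_isUnit u).1 hu)).irreducible hϖ
  by_cases hz₀ : residue C z = 0
  · obtain ⟨k, hk⟩ := binomExpansion (f.map (algebraMap A C)) x₀ ϖ
    rw [derivative_map, eval_map_algebraMap, eval_map_algebraMap, eval_map_algebraMap] at hk
    have hx : aeval (x₀ + ϖ) f = ϖ * (z + aeval x₀ (derivative f) + k * ϖ) := by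
      rw [hk, hz]
      ring
    refine ⟨x₀ + ϖ, by rw [map_add, hϖ₀, add_zero], hx ▸ hirr _ ?_⟩
    simpa only [map_add, map_mul, hz₀, hϖ₀, zero_add, mul_zero, add_zero] using h₁
  · exact ⟨x₀, rfl, hz ▸ hirr z hz₀⟩

variable [IsLocalRing A]

theorem maximalIdeal_map_ne_bot_of_isIntegral [IsDomain C] [IsLocalRing C] [Algebra.IsIntegral A C]
    (hC : ¬ IsField C) : (maximalIdeal A).map (algebraMap A C) ≠ ⊥ := fun h ↦ by
  have hcomap : (⊥ : Ideal C).comap (algebraMap A C) = maximalIdeal A :=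
    ((maximalIdeal.isMaximal A).eq_of_le (Ideal.IsPrime.ne_top inferInstance)
      (Ideal.map_le_iff_le_comap.1 h.le)).symm
  have := Ideal.isMaximal_of_isIntegral_of_isMaximal_comap (R := A) (⊥ : Ideal C)
    (hcomap ▸ maximalIdeal.isMaximal A)
  exact hC (Ring.isField_iff_maximal_bot.2 this)

theorem residue_aeval [IsLocalRing C] [IsLocalHom (algebraMap A C)] (x : C) (f : A[X]) :
    residue C (aeval x f) = aeval (residue C x) (f.map (residue A)) :=
  map_aeval_eq_aeval_map (φ := residue A) (ψ := residue C) rfl f x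

theorem exists_mem_adjoin_sub_mem_maximalIdeal [IsLocalRing C] [IsLocalHom (algebraMap A C)] {x : C}
    (hx : Algebra.adjoin (ResidueField A) {residue C x} = ⊤) (c : C) :
    ∃ s ∈ Algebra.adjoin A {x}, c - s ∈ maximalIdeal C := by
  have hc : residue C c ∈ Algebra.adjoin (ResidueField A) {residue C x} := hx ▸ Algebra.mem_top
  rw [Algebra.adjoin_singleton_eq_range_aeval] at hc
  obtain ⟨g, hg⟩ := hc
  obtain ⟨f, rfl⟩ := map_surjective _ residue_surjective g
  refine ⟨aeval x f, aeval_mem_adjoin_singleton A x, ?_⟩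
  rw [← residue_eq_zero_iff, map_sub, residue_aeval, sub_eq_zero]
  exact hg.symm

variable [IsDomain C] [IsDiscreteValuationRing C] [IsLocalHom (algebraMap A C)]

variable [Module.Finite A C] [Algebra.IsSeparable (ResidueField A) (ResidueField C)]

variable (A C) in
theorem exists_irreducible_aeval_and_adjoin_residue_eq_top :
    ∃ (x : C) (f : A[X]), Irreducible (aeval x f) ∧
      Algebra.adjoin (ResidueField A) {residue C x} = ⊤ := by
  obtain ⟨α, hα⟩ := Field.exists_primitive_element (ResidueField A) (ResidueField C)
  obtain ⟨x₀, rfl⟩ := residue_surjective α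
  obtain ⟨f, hf⟩ := map_surjective _ residue_surjective (minpoly (ResidueField A) (residue C x₀))
  obtain ⟨x, hx, hirr⟩ := exists_residue_eq_and_irreducible_aeval (f := f) (x₀ := x₀)
    (by rw [residue_aeval, hf, minpoly.aeval])
    (by
      rw [residue_aeval, ← derivative_map, hf]
      exact (Algebra.IsSeparable.isSeparable (ResidueField A) _).aeval_derivative_ne_zero
        (minpoly.aeval _ _))
  refine ⟨x, f, hirr, ?_⟩
  rw [hx, ← IntermediateField.adjoin_simple_toSubalgebra_of_isAlgebraic
    (Algebra.IsAlgebraic.isAlgebraic _), hα, IntermediateField.top_toSubalgebra]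

variable (A C) in
theorem exists_adjoin_eq_top_of_isSeparable_residueField : ∃ x : C, Algebra.adjoin A {x} = ⊤ := by
  obtain ⟨x, f, hirr, hx⟩ := exists_irreducible_aeval_and_adjoin_residue_eq_top A C
  obtain ⟨n, hn⟩ := exists_maximalIdeal_pow_eq_of_principal C (IsPrincipalIdealRing.principal _) _
    (maximalIdeal_map_ne_bot_of_isIntegral (A := A) (IsDiscreteValuationRing.not_isField C))
  refine ⟨x, eq_top_iff.2 <| Submodule.le_of_le_smul_of_le_jacobson_bot
    (Module.finite_def.mp inferInstance) (maximalIdeal_le_jacobson ⊥)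
    (?_ : ⊤ ≤ (Algebra.adjoin A {x}).toSubmodule ⊔ maximalIdeal A • ⊤)⟩
  intro c _
  obtain ⟨s, hs, h⟩ := exists_mem_subalgebra_sub_mem_maximalIdeal_pow
    (exists_mem_adjoin_sub_mem_maximalIdeal hx) hirr (aeval_mem_adjoin_singleton A x) n c
  rw [Ideal.smul_top_eq_map, hn]
  exact Submodule.mem_sup.2 ⟨s, hs, c - s, h, by ring⟩

end Monogenic

section LowerRamificationGroup

open IsLocalRing

variable (G R : Type*) [Group G] [CommRing R] [IsLocalRing R] [MulSemiringAction G R]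

/-- The `i`-th ramification group, in the lower numbering, of a group acting on a local ring. -/
def lowerRamificationGroup (i : ℕ) : Subgroup G :=
  (maximalIdeal R ^ (i + 1)).inertia G

/-- `t` is a jump of the lower ramification filtration of `G` acting on the local ring `R`. -/
def IsLowerRamificationJump (t : ℕ) : Prop :=
  lowerRamificationGroup G R t ≠ lowerRamificationGroup G R (t + 1)

variable {G R}

theorem mem_lowerRamificationGroup_iff {i : ℕ} {g : G} :
    g ∈ lowerRamificationGroup G R i ↔ ∀ x : R, g • x - x ∈ maximalIdeal R ^ (i + 1) :=
  Iff.rfl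

theorem lowerRamificationGroup_antitone : Antitone (lowerRamificationGroup G R) :=
  fun _ _ hij _ hg x ↦ Ideal.pow_le_pow_right (Nat.succ_le_succ hij) (hg x)

theorem lowerRamificationGroup_eq_of_forall_not_isLowerRamificationJump {i j : ℕ} (hij : i ≤ j)
    (h : ∀ k, i ≤ k → k < j → ¬ IsLowerRamificationJump G R k) :
    lowerRamificationGroup G R i = lowerRamificationGroup G R j := by
  induction j, hij using Nat.le_induction with
  | base => rfl
  | succ j hij ih =>
    rw [ih fun k hk hkj ↦ h k hk (hkj.trans j.lt_succ_self)]
    exact not_not.1 (h j hij j.lt_succ_self)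

theorem iInf_lowerRamificationGroup [IsNoetherianRing R] [FaithfulSMul G R] :
    ⨅ i, lowerRamificationGroup G R i = ⊥ := by
  refine (Subgroup.eq_bot_iff_forall _).2 fun g hg ↦
    FaithfulSMul.eq_of_smul_eq_smul (α := R) fun x ↦ ?_
  have hx : g • x - x ∈ ⨅ i, maximalIdeal R ^ i := Ideal.mem_iInf.2 fun i ↦
    Ideal.pow_le_pow_right i.le_succ (Subgroup.mem_iInf.1 hg i x)
  rwa [Ideal.iInf_pow_eq_bot_of_isLocalRing _ (Ideal.IsPrime.ne_top inferInstance), Ideal.mem_bot,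
    sub_eq_zero, ← one_smul G x, smul_smul, mul_one] at hx

theorem lowerRamificationGroup_eq_bot_of_forall_not_isLowerRamificationJump [IsNoetherianRing R]
    [FaithfulSMul G R] {i : ℕ} (h : ∀ k, i ≤ k → ¬ IsLowerRamificationJump G R k) :
    lowerRamificationGroup G R i = ⊥ := by
  rw [← iInf_lowerRamificationGroup (G := G) (R := R), eq_comm]
  refine le_antisymm (iInf_le _ i) (le_iInf fun j ↦ ?_)
  rcases le_total i j with hij | hji
  · exact (lowerRamificationGroup_eq_of_forall_not_isLowerRamificationJump hij
      fun k hk _ ↦ h k hk).le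
  · exact lowerRamificationGroup_antitone hji

variable {H : Type*} [Group H] [MulSemiringAction H R] {ι : H →* G}

theorem lowerRamificationGroup_eq_map_of_le_range (hι : ∀ h (x : R), ι h • x = h • x) {i : ℕ}
    (hi : lowerRamificationGroup G R i ≤ ι.range) :
    lowerRamificationGroup G R i = (lowerRamificationGroup H R i).map ι := by
  have hcomap : lowerRamificationGroup H R i = (lowerRamificationGroup G R i).comap ι := by
    ext h
    simp only [Subgroup.mem_comap, mem_lowerRamificationGroup_iff, hι]
  rw [hcomap, Subgroup.map_comap_eq, inf_eq_right.2 hi]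

theorem isLowerRamificationJump_iff_of_le_range [FaithfulSMul H R]
    (hι : ∀ h (x : R), ι h • x = h • x) {i : ℕ}
    (hi : lowerRamificationGroup G R i ≤ ι.range) :
    IsLowerRamificationJump G R i ↔ IsLowerRamificationJump H R i := by
  have hinj : Function.Injective ι := fun h₁ h₂ h ↦
    FaithfulSMul.eq_of_smul_eq_smul (α := R) fun x ↦ by rw [← hι, h, hι]
  rw [IsLowerRamificationJump, lowerRamificationGroup_eq_map_of_le_range hι hi,
    lowerRamificationGroup_eq_map_of_le_range hι
      ((lowerRamificationGroup_antitone i.le_succ).trans hi),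
    (Subgroup.map_injective hinj).ne_iff, IsLowerRamificationJump]

end LowerRamificationGroup

section Displacement

open Polynomial

theorem prod_X_sub_C_dvd_of_injective_of_isRoot {R ι : Type*} [CommRing R] [IsDomain R] [Fintype ι]
    {r : ι → R} (hr : Function.Injective r) {F : R[X]} (hF : ∀ i, F.IsRoot (r i)) :
    ∏ i, (X - C (r i)) ∣ F := by
  rcases eq_or_ne F 0 with rfl | hF₀
  · exact dvd_zero _
  have hle : Finset.univ.val.map r ≤ F.roots :=
    (Multiset.le_iff_subset (Finset.univ.nodup.map hr)).2 fun c hc ↦ by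
      obtain ⟨i, -, rfl⟩ := Multiset.mem_map.1 hc
      exact (mem_roots hF₀).2 (hF i)
  simpa [Multiset.map_map] using (Multiset.prod_X_sub_C_dvd_iff_le_roots hF₀ _).2 hle

section Generator

variable {A C G : Type*} [CommRing A] [CommRing C] [Algebra A C] [Group G] [MulSemiringAction G C]
  [SMulCommClass G A C] {x : C}

theorem exists_aeval_eq_of_adjoin_eq_top (hx : Algebra.adjoin A {x} = ⊤) (c : C) :
    ∃ f : A[X], aeval x f = c := by
  have hc : c ∈ Algebra.adjoin A {x} := hx ▸ Algebra.mem_top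
  rwa [Algebra.adjoin_singleton_eq_range_aeval] at hc

theorem smul_sub_mem_of_adjoin_eq_top (hx : Algebra.adjoin A {x} = ⊤) {I : Ideal C} {g : G}
    (h : g • x - x ∈ I) (c : C) : g • c - c ∈ I := by
  obtain ⟨f, rfl⟩ := exists_aeval_eq_of_adjoin_eq_top hx c
  rw [← aeval_smul, ← eval_map_algebraMap, ← eval_map_algebraMap]
  exact I.mem_of_dvd (sub_dvd_eval_sub _ _ _) h

theorem smul_left_injective_of_adjoin_eq_top [FaithfulSMul G C]
    (hx : Algebra.adjoin A {x} = ⊤) : Function.Injective fun g : G ↦ g • x := fun g₁ g₂ h ↦ by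
  refine FaithfulSMul.eq_of_smul_eq_smul (α := C) fun c ↦ ?_
  obtain ⟨f, rfl⟩ := exists_aeval_eq_of_adjoin_eq_top hx c
  rw [← aeval_smul, ← aeval_smul]
  exact congrArg (aeval · f) h

-- If `y = f(x)`, the conjugates of `x` are roots of `f(T) - y`.
theorem prod_smul_sub_smul_dvd_smul_sub {H : Type*} [Group H] [Fintype H] [MulSemiringAction H C]
    [SMulCommClass H A C] [FaithfulSMul H C] [IsDomain C] (hx : Algebra.adjoin A {x} = ⊤) (g : G)
    {y : C} (hy : ∀ h : H, h • y = y) : ∏ h : H, (g • x - h • x) ∣ g • y - y := by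
  obtain ⟨f, rfl⟩ := exists_aeval_eq_of_adjoin_eq_top hx y
  have hdvd := eval_dvd (x := g • x) <|
    prod_X_sub_C_dvd_of_injective_of_isRoot (smul_left_injective_of_adjoin_eq_top (G := H) hx)
      (F := f.map (algebraMap A C) - .C (aeval x f)) fun h ↦ by
        rw [IsRoot.def, eval_sub, eval_C, eval_map_algebraMap, aeval_smul, hy, sub_self]
  simpa only [eval_prod, eval_sub, eval_X, eval_C, eval_map_algebraMap, aeval_smul] using hdvd

end Generator

-- Evaluating the characteristic polynomial `f` of `x` at the root `g • x` of `f ^ q`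
-- leaves only the differences between the coefficients of `f` and `f ^ q`.
theorem prod_smul_sub_smul_mem_map {B C G Q H : Type*} [CommRing B] [CommRing C] [Algebra B C]
    [Group G] [MulSemiringAction G C] [Group Q] [MulSemiringAction Q B] [Group H] [Fintype H]
    [MulSemiringAction H C] [Algebra.IsInvariant B C H] {g : G} {q : Q}
    (hgq : ∀ b, algebraMap B C (q • b) = g • algebraMap B C b) {I : Ideal B}
    (hI : ∀ b : B, q • b - b ∈ I) (x : C) :
    ∏ h : H, (g • x - h • x) ∈ I.map (algebraMap B C) := by
  obtain ⟨f, hf⟩ := (lifts_iff_ringHom_rangeS _).1 (Algebra.IsInvariant.charpoly_mem_lifts B C H x)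
  change f.map (algebraMap B C) = _ at hf
  have hprod : eval₂ (algebraMap B C) (g • x) f = ∏ h : H, (g • x - h • x) := by
    rw [← eval_map, hf, MulSemiringAction.charpoly_eq, eval_prod]
    simp only [eval_sub, eval_X, eval_C]
  have hroot : eval₂ (algebraMap B C) (g • x)
      (f.map (MulSemiringAction.toRingHom Q B q)) = 0 := by
    have hcomp : (algebraMap B C).comp (MulSemiringAction.toRingHom Q B q) =
        (MulSemiringAction.toRingHom G C g).comp (algebraMap B C) := RingHom.ext hgq
    have hx : eval₂ (algebraMap B C) x f = 0 := by
      rw [← eval_map, hf, MulSemiringAction.eval_charpoly]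
    rw [eval₂_map, hcomp, ← MulSemiringAction.toRingHom_apply G C g x, ← hom_eval₂, hx, map_zero]
  rw [← hprod, ← neg_mem_iff, ← zero_sub, ← hroot, ← eval₂_sub, eval₂_eq_sum, sum_def]
  refine sum_mem fun i _ ↦ Ideal.mul_mem_right _ _ (Ideal.mem_map_of_mem _ ?_)
  rw [coeff_sub, coeff_map]
  exact hI (f.coeff i)

end Displacement

section Valuation

open IsLocalRing

variable {R : Type*} [CommRing R] [IsDomain R] [IsDiscreteValuationRing R]

theorem exists_mem_maximalIdeal_pow_of_prod_mem {ι : Type*} {s : Finset ι} (hs : s.Nonempty)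
    {f : ι → R} {n : ℕ} (h : ∏ i ∈ s, f i ∈ maximalIdeal R ^ (s.card * n)) :
    ∃ i ∈ s, f i ∈ maximalIdeal R ^ n := by
  obtain ⟨ϖ, hϖ⟩ := IsDiscreteValuationRing.exists_irreducible R
  have hmem (k : ℕ) (c : R) : c ∈ maximalIdeal R ^ k ↔ ϖ ^ k ∣ c := by
    rw [hϖ.maximalIdeal_eq, Ideal.span_singleton_pow, Ideal.mem_span_singleton]
  simp only [hmem] at h ⊢
  by_contra! hn
  have hval (i : ι) (hi : i ∈ s) : ∃ k < n, Associated (f i) (ϖ ^ k) := by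
    have hf : f i ≠ 0 := fun h₀ ↦ hn i hi (h₀ ▸ dvd_zero _)
    obtain ⟨k, hk⟩ := IsDiscreteValuationRing.associated_pow_irreducible hf hϖ
    exact ⟨k, not_le.1 fun hnk ↦ hn i hi ((pow_dvd_pow ϖ hnk).trans hk.symm.dvd), hk⟩
  choose! k hkn hk using hval
  have hdvd : ϖ ^ (s.card * n) ∣ ϖ ^ ∑ i ∈ s, k i := by
    rw [← Finset.prod_pow_eq_pow_sum]
    exact h.trans (Associated.prod s _ _ hk).dvd
  have hle : s.card * n ≤ ∑ i ∈ s, k i := (pow_dvd_pow_iff hϖ.ne_zero hϖ.not_isUnit).1 hdvd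
  have hlt : ∑ i ∈ s, k i < s.card * n := by
    simpa only [Finset.sum_const, smul_eq_mul] using Finset.sum_lt_sum_of_nonempty hs hkn
  exact hle.not_gt hlt

end Valuation

section Tower

open IsLocalRing

section RamificationIndex

variable {B C H : Type*} [CommRing B] [CommRing C] [IsDomain B] [IsDomain C]
  [IsDiscreteValuationRing B] [IsDiscreteValuationRing C] [PerfectField (ResidueField B)]
  [Algebra B C] [Module.Finite B C] [FaithfulSMul B C] [Group H] [Finite H]
  [MulSemiringAction H C] [IsGaloisGroup H B C]

theorem map_maximalIdeal_eq_pow_card_lowerRamificationGroup_zero :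
    (maximalIdeal B).map (algebraMap B C) =
      maximalIdeal C ^ Nat.card (lowerRamificationGroup H C 0) := by
  have : PerfectField (maximalIdeal B).ResidueField := .of_ringEquiv (K := ResidueField B) <|
    .ofBijective _ (maximalIdeal B).bijective_algebraMap_quotient_residueField
  obtain ⟨e, he⟩ := exists_maximalIdeal_pow_eq_of_principal C (IsPrincipalIdealRing.principal _) _
    (maximalIdeal_map_ne_bot_of_isIntegral (A := B) (IsDiscreteValuationRing.not_isField C))
  have hram : (maximalIdeal B).ramificationIdx' (maximalIdeal C) = e := by
    refine Ideal.ramificationIdx'_spec he.le fun h ↦ ?_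
    rw [he] at h
    exact (Ideal.pow_right_strictAnti _ (IsDiscreteValuationRing.not_a_field C)
      (Ideal.IsPrime.ne_top inferInstance) e.lt_succ_self).not_ge h
  rw [lowerRamificationGroup, zero_add, pow_one,
    Ideal.card_inertia_eq_ramificationIdxIn (maximalIdeal B) (maximalIdeal C),
    Ideal.ramificationIdxIn_eq_ramificationIdx _ (maximalIdeal C) H,
    ← Ideal.ramificationIdx'_eq_ramificationIdx _ _ (IsDiscreteValuationRing.not_a_field B),
    hram, he]

theorem algebraMap_mem_maximalIdeal_pow_card_mul_iff {b : B} {n : ℕ} :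
    algebraMap B C b ∈ maximalIdeal C ^ (Nat.card (lowerRamificationGroup H C 0) * n) ↔
      b ∈ maximalIdeal B ^ n := by
  rw [pow_mul, ← map_maximalIdeal_eq_pow_card_lowerRamificationGroup_zero (B := B), ← Ideal.map_pow,
    ← Ideal.mem_comap, Ideal.comap_map_eq_self_of_faithfullyFlat]

end RamificationIndex

section Generator

variable {A C H : Type*} [CommRing A] [CommRing C] [Algebra A C] [Group H] [MulSemiringAction H C]
  [SMulCommClass H A C] {x : C}

theorem mem_lowerRamificationGroup_iff_of_adjoin_eq_top [IsLocalRing C]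
    (hx : Algebra.adjoin A {x} = ⊤) {i : ℕ} {h : H} :
    h ∈ lowerRamificationGroup H C i ↔ h • x - x ∈ maximalIdeal C ^ (i + 1) :=
  ⟨fun hh ↦ hh x, fun hh ↦ smul_sub_mem_of_adjoin_eq_top hx hh⟩

theorem prod_sub_smul_mem_maximalIdeal_pow_iff [IsDomain C] [IsDiscreteValuationRing C] [Fintype H]
    (hx : Algebra.adjoin A {x} = ⊤) {s : ℕ}
    (hs : lowerRamificationGroup H C 0 ≤ lowerRamificationGroup H C s) {c : C}
    (hc : c - x ∈ maximalIdeal C) :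
    ∏ h : H, (c - h • x) ∈
        maximalIdeal C ^ (Nat.card (lowerRamificationGroup H C 0) * (s + 1)) ↔
      c - x ∈ maximalIdeal C ^ (s + 1) := by
  classical
  set S : Finset H := {h | h ∈ lowerRamificationGroup H C 0} with hS
  have hcard : Nat.card (lowerRamificationGroup H C 0) = S.card := by
    rw [Nat.card_eq_fintype_card, Fintype.card_subtype]
  have hunit : IsUnit (∏ h : H with h ∉ lowerRamificationGroup H C 0, (c - h • x)) := by
    refine Finset.prod_induction _ IsUnit (fun _ _ ↦ .mul) isUnit_one fun h hh ↦ ?_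
    refine notMem_maximalIdeal.1 fun hch ↦ (Finset.mem_filter.1 hh).2 ?_
    rw [mem_lowerRamificationGroup_iff_of_adjoin_eq_top hx, zero_add, pow_one]
    simpa using sub_mem hc hch
  have hterm (h : H) (hh : h ∈ S) :
      c - h • x ∈ maximalIdeal C ^ (s + 1) ↔ c - x ∈ maximalIdeal C ^ (s + 1) := by
    rw [← sub_sub_sub_cancel_right c (h • x) x]
    exact Submodule.sub_mem_iff_left _ (hs (Finset.mem_filter.1 hh).2 x)
  rw [← Finset.prod_filter_mul_prod_filter_not _ (· ∈ lowerRamificationGroup H C 0),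
    Ideal.mul_unit_mem_iff_mem _ hunit, ← hS, hcard]
  constructor
  · intro h
    obtain ⟨h, hh, hmem⟩ := exists_mem_maximalIdeal_pow_of_prod_mem
      ⟨1, Finset.mem_filter.2 ⟨Finset.mem_univ _, one_mem _⟩⟩ h
    exact (hterm h hh).1 hmem
  · intro h
    rw [mul_comm, pow_mul, ← Finset.prod_const]
    exact Ideal.prod_mem_prod fun i hi ↦ (hterm i hi).2 h

end Generator

end Tower

section RestrictHom

variable {A B C G Q H : Type*} [CommRing A] [CommRing B] [CommRing C] [IsDomain C] [Algebra A B]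
  [Algebra B C] [Algebra A C] [IsScalarTower A B C] [FaithfulSMul A B] [FaithfulSMul B C]
  [Group G] [Finite G] [MulSemiringAction G C] [IsGaloisGroup G A C]
  [Group Q] [Finite Q] [MulSemiringAction Q B] [IsGaloisGroup Q A B]
  [Group H] [Finite H] [MulSemiringAction H C] [IsGaloisGroup H B C]

theorem restrictHom_eq_one_iff {ι : H →* G} (hι : ∀ h (c : C), ι h • c = h • c) {g : G} :
    IsGaloisGroup.restrictHom G Q A B C g = 1 ↔ g ∈ ι.range := by
  have : FaithfulSMul G C := IsGaloisGroup.faithful A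
  have : FaithfulSMul Q B := IsGaloisGroup.faithful A
  constructor
  · intro hg
    let f : C ≃ₐ[B] C := AlgEquiv.ofRingEquiv (f := MulSemiringAction.toRingEquiv G C g) fun b ↦
      (IsGaloisGroup.algebraMap_restrictHom_smul G Q A B C g b).symm.trans
        (by rw [hg, one_smul])
    refine ⟨(IsGaloisGroup.mulEquivAlgEquiv H B C).symm f,
      FaithfulSMul.eq_of_smul_eq_smul (α := C) fun c ↦ ?_⟩
    rw [hι]
    exact DFunLike.congr_fun ((IsGaloisGroup.mulEquivAlgEquiv H B C).apply_symm_apply f) c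
  · rintro ⟨h, rfl⟩
    refine FaithfulSMul.eq_of_smul_eq_smul (α := B) fun b ↦ FaithfulSMul.algebraMap_injective B C ?_
    rw [IsGaloisGroup.algebraMap_restrictHom_smul, hι, smul_algebraMap, one_smul]

end RestrictHom

section GaloisTower

open IsLocalRing

variable {A B C G Q H : Type*} [CommRing A] [CommRing B] [CommRing C] [IsDomain B] [IsDomain C]
  [IsDiscreteValuationRing B] [IsDiscreteValuationRing C] [Algebra A B] [Algebra B C] [Algebra A C]
  [IsScalarTower A B C] [FaithfulSMul B C] [PerfectField (ResidueField B)] [Module.Finite B C]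
  [Group G] [MulSemiringAction G C] [Group Q] [MulSemiringAction Q B]
  [Group H] [MulSemiringAction H C] [IsGaloisGroup H B C]

section Compatible

variable [SMulCommClass G A C] {x : C} {g : G} {q : Q}

theorem mem_lowerRamificationGroup_iff_prod_smul_sub_smul_mem [Fintype H]
    (hx : Algebra.adjoin A {x} = ⊤)
    (hgq : ∀ b, algebraMap B C (q • b) = g • algebraMap B C b) {i : ℕ} :
    q ∈ lowerRamificationGroup Q B i ↔ ∏ h : H, (g • x - h • x) ∈
      maximalIdeal C ^ (Nat.card (lowerRamificationGroup H C 0) * (i + 1)) := by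
  have : SMulCommClass H A C :=
    ⟨fun h a c ↦ by rw [← algebraMap_smul B a c, smul_comm, algebraMap_smul]⟩
  have : FaithfulSMul H C := IsGaloisGroup.faithful B
  constructor
  · intro hq
    rw [pow_mul, ← map_maximalIdeal_eq_pow_card_lowerRamificationGroup_zero (B := B),
      ← Ideal.map_pow]
    exact prod_smul_sub_smul_mem_map hgq hq x
  · intro hprod
    refine mem_lowerRamificationGroup_iff.2 fun b ↦ ?_
    rw [← algebraMap_mem_maximalIdeal_pow_card_mul_iff (C := C) (H := H), map_sub, hgq]
    exact Ideal.mem_of_dvd _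
      (prod_smul_sub_smul_dvd_smul_sub hx g fun h : H ↦ smul_algebraMap h b) hprod

variable [Finite H]

theorem mem_lowerRamificationGroup_iff_of_le (hx : Algebra.adjoin A {x} = ⊤) {s : ℕ}
    (hgq : ∀ b, algebraMap B C (q • b) = g • algebraMap B C b)
    (hs : lowerRamificationGroup H C 0 ≤ lowerRamificationGroup H C s)
    (hg : g ∈ lowerRamificationGroup G C 0) :
    q ∈ lowerRamificationGroup Q B s ↔ g ∈ lowerRamificationGroup G C s := by
  have := Fintype.ofFinite H
  have : SMulCommClass H A C :=
    ⟨fun h a c ↦ by rw [← algebraMap_smul B a c, smul_comm, algebraMap_smul]⟩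
  have hgx : g • x - x ∈ maximalIdeal C := by
    simpa only [zero_add, pow_one] using mem_lowerRamificationGroup_iff.1 hg x
  rw [mem_lowerRamificationGroup_iff_prod_smul_sub_smul_mem (H := H) hx hgq,
    prod_sub_smul_mem_maximalIdeal_pow_iff hx hs hgx,
    mem_lowerRamificationGroup_iff_of_adjoin_eq_top hx]

theorem exists_inv_mul_mem_lowerRamificationGroup_zero (hx : Algebra.adjoin A {x} = ⊤)
    (hgq : ∀ b, algebraMap B C (q • b) = g • algebraMap B C b)
    {ι : H →* G} (hι : ∀ h (c : C), ι h • c = h • c) (hq : q ∈ lowerRamificationGroup Q B 0) :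
    ∃ h : H, (ι h)⁻¹ * g ∈ lowerRamificationGroup G C 0 := by
  have := Fintype.ofFinite H
  rw [mem_lowerRamificationGroup_iff_prod_smul_sub_smul_mem (H := H) hx hgq, pow_mul, zero_add,
    pow_one] at hq
  obtain ⟨h, -, hh⟩ := (Ideal.IsPrime.prod_mem_iff).1 (Ideal.pow_le_self Nat.card_pos.ne' hq)
  refine ⟨h, (mem_lowerRamificationGroup_iff_of_adjoin_eq_top hx).2 ?_⟩
  have hsmul : ((ι h)⁻¹ * g) • x - x = (ι h)⁻¹ • (g • x - h • x) := by
    rw [mul_smul, smul_sub, ← hι, inv_smul_smul]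
  rw [hsmul, zero_add, pow_one]
  exact fun hu ↦ hh ((isUnit_map_iff (MulSemiringAction.toRingEquiv G C (ι h)⁻¹) _).1 hu)

end Compatible

variable [FaithfulSMul A B] [Finite G] [Finite Q] [Finite H] [IsGaloisGroup G A C]
  [IsGaloisGroup Q A B]

theorem map_restrictHom_lowerRamificationGroup_of_le {x : C} (hx : Algebra.adjoin A {x} = ⊤)
    {ι : H →* G} (hι : ∀ h (c : C), ι h • c = h • c) {s : ℕ}
    (hs : lowerRamificationGroup H C 0 ≤ lowerRamificationGroup H C s) :
    (lowerRamificationGroup G C s).map (IsGaloisGroup.restrictHom G Q A B C) =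
      lowerRamificationGroup Q B s := by
  set res := IsGaloisGroup.restrictHom G Q A B C
  have hcompat (g : G) (b : B) : algebraMap B C (res g • b) = g • algebraMap B C b :=
    IsGaloisGroup.algebraMap_restrictHom_smul G Q A B C g b
  ext q
  constructor
  · rintro ⟨g, hg, rfl⟩
    exact (mem_lowerRamificationGroup_iff_of_le hx (hcompat g) hs
      (lowerRamificationGroup_antitone s.zero_le hg)).2 hg
  · intro hq
    obtain ⟨g, rfl⟩ := IsGaloisGroup.restrictHom_surjective G Q A B C q
    obtain ⟨h, hh⟩ := exists_inv_mul_mem_lowerRamificationGroup_zero hx (hcompat g) hι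
      (lowerRamificationGroup_antitone s.zero_le hq)
    have hg : res ((ι h)⁻¹ * g) = res g := by
      rw [map_mul, map_inv, (restrictHom_eq_one_iff hι).2 ⟨h, rfl⟩, inv_one, one_mul]
    exact ⟨(ι h)⁻¹ * g, (mem_lowerRamificationGroup_iff_of_le hx (hcompat _) hs hh).1
      (hg.symm ▸ hq), hg⟩

theorem isLowerRamificationJump_iff_of_le {x : C} (hx : Algebra.adjoin A {x} = ⊤)
    {ι : H →* G} (hι : ∀ h (c : C), ι h • c = h • c) {j : ℕ}
    (hj : lowerRamificationGroup H C 0 ≤ lowerRamificationGroup H C (j + 1)) :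
    IsLowerRamificationJump G C j ↔ IsLowerRamificationJump Q B j := by
  refine not_congr ⟨fun h ↦ ?_, fun h ↦ ?_⟩
  · rw [← map_restrictHom_lowerRamificationGroup_of_le (Q := Q) hx hι hj,
      ← map_restrictHom_lowerRamificationGroup_of_le (Q := Q) hx hι
        (hj.trans (lowerRamificationGroup_antitone j.le_succ)), h]
  · refine le_antisymm (fun g hg ↦ ?_) (lowerRamificationGroup_antitone j.le_succ)
    rw [← mem_lowerRamificationGroup_iff_of_le hx
      (IsGaloisGroup.algebraMap_restrictHom_smul G Q A B C g) hj
      (lowerRamificationGroup_antitone j.zero_le hg), ← h,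
      ← map_restrictHom_lowerRamificationGroup_of_le hx hι
        (hj.trans (lowerRamificationGroup_antitone j.le_succ))]
    exact Subgroup.mem_map_of_mem _ hg

end GaloisTower

section Padic

open IsLocalRing

variable (p : ℕ) [Fact p.Prime] {L : Type*} [Field L] [Algebra ℚ_[p] L] [Algebra ℤ_[p] L]
  [IsScalarTower ℤ_[p] ℚ_[p] L]

theorem isIntegral_padicInt_of_spectralNorm_le_one {x : L} (hx : IsIntegral ℚ_[p] x)
    (h : spectralNorm ℚ_[p] L x ≤ 1) : IsIntegral ℤ_[p] x := by
  have hm := minpoly.monic hx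
  have hlifts : minpoly ℚ_[p] x ∈ Polynomial.lifts (algebraMap ℤ_[p] ℚ_[p]) :=
    (Polynomial.lifts_iff_coeff_lifts _).2 fun n ↦ ⟨⟨_, (spectralValue_le_one_iff hm).1 h n⟩, rfl⟩
  obtain ⟨q, hq, -, hqm⟩ := Polynomial.lifts_and_degree_eq_and_monic hlifts hm
  refine ⟨q, hqm, ?_⟩
  rw [IsScalarTower.algebraMap_eq ℤ_[p] ℚ_[p] L, ← Polynomial.eval₂_map, hq]
  exact minpoly.aeval _ _

variable (L) (O : Type*) [CommRing O] [Algebra ℤ_[p] O] [Algebra O L] [IsScalarTower ℤ_[p] O L]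

include p L in
theorem faithfulSMul_padicInt : FaithfulSMul ℤ_[p] O := by
  refine (faithfulSMul_iff_algebraMap_injective _ _).2 (.of_comp (f := algebraMap O L) ?_)
  rw [← RingHom.coe_comp, ← IsScalarTower.algebraMap_eq,
    IsScalarTower.algebraMap_eq ℤ_[p] ℚ_[p] L]
  exact (algebraMap ℚ_[p] L).injective.comp (IsFractionRing.injective ℤ_[p] ℚ_[p])

variable [FiniteDimensional ℚ_[p] L] [IsIntegralClosure O ℤ_[p] L]

include p L

theorem valuationRing_of_isIntegralClosure_padicInt [IsDomain O] : ValuationRing O := by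
  have := IsIntegralClosure.isFractionRing_of_finite_extension ℤ_[p] ℚ_[p] L O
  have hO {y : L} (hy : spectralNorm ℚ_[p] L y ≤ 1) : IsLocalization.IsInteger O y :=
    IsIntegralClosure.isIntegral_iff.1
      (isIntegral_padicInt_of_spectralNorm_le_one p (Algebra.IsIntegral.isIntegral y) hy)
  refine (ValuationRing.iff_isInteger_or_isInteger O L).2 fun x ↦ ?_
  refine (le_total (spectralNorm ℚ_[p] L x) 1).imp hO fun h ↦ hO ?_
  have hinv := map_inv₀ (spectralMulAlgNorm ℚ_[p] L) x
  rw [spectralMulAlgNorm_def, spectralMulAlgNorm_def] at hinv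
  exact hinv ▸ inv_le_one_of_one_le₀ h

theorem isDiscreteValuationRing_of_isIntegralClosure_padicInt [IsDomain O] :
    IsDiscreteValuationRing O := by
  have := valuationRing_of_isIntegralClosure_padicInt p L O
  have := IsIntegralClosure.isDedekindDomain ℤ_[p] ℚ_[p] L O
  have := faithfulSMul_padicInt p L O
  have := IsIntegralClosure.isIntegral_algebra ℤ_[p] L (A := O)
  refine ((IsDiscreteValuationRing.TFAE O fun hO ↦ ?_).out 0 2).2 ‹_›
  exact IsDiscreteValuationRing.not_isField ℤ_[p] (isField_of_isIntegral_of_isField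
    (FaithfulSMul.algebraMap_injective ℤ_[p] O) hO)

theorem finite_residueField_of_isIntegralClosure_padicInt [IsLocalRing O] :
    Finite (ResidueField O) := by
  have := IsIntegralClosure.finite ℤ_[p] ℚ_[p] L O
  exact Module.finite_of_finite (ResidueField ℤ_[p])

end Padic

section RingOfInt

open IsLocalRing

variable (p : ℕ) [Fact p.Prime] {K L : Type*} [Field K] [Field L] [Algebra ℚ_[p] K]
  [Algebra ℚ_[p] L]

theorem map_mem_ringOfInt (f : K →ₐ[ℚ_[p]] L) {x : K} (hx : x ∈ ringOfInt p K) :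
    f x ∈ ringOfInt p L := by
  let := padicIntAlgebra p K
  let := padicIntAlgebra p L
  let g : K →ₐ[ℤ_[p]] L := { f with commutes' := fun z ↦ f.commutes (z : ℚ_[p]) }
  exact IsIntegral.map g hx

section Ring

variable (L)

/-- The integral closure `ringOfInt p L` of `ℤ_[p]` as a `ℤ_[p]`-algebra. -/
noncomputable instance ringOfIntAlgebra : Algebra ℤ_[p] (ringOfInt p L) :=
  letI := padicIntAlgebra p L
  (integralClosure ℤ_[p] L).algebra

variable [FiniteDimensional ℚ_[p] L]

instance : IsFractionRing (ringOfInt p L) L :=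
  letI := padicIntAlgebra p L
  have : IsScalarTower ℤ_[p] ℚ_[p] L := .of_algebraMap_eq fun _ ↦ rfl
  integralClosure.isFractionRing_of_finite_extension ℚ_[p] L

instance : IsDiscreteValuationRing (ringOfInt p L) :=
  letI := padicIntAlgebra p L
  have : IsScalarTower ℤ_[p] ℚ_[p] L := .of_algebraMap_eq fun _ ↦ rfl
  isDiscreteValuationRing_of_isIntegralClosure_padicInt p L (integralClosure ℤ_[p] L)

instance : Finite (ResidueField (ringOfInt p L)) :=
  letI := padicIntAlgebra p L
  have : IsScalarTower ℤ_[p] ℚ_[p] L := .of_algebraMap_eq fun _ ↦ rfl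
  have : IsLocalRing (integralClosure ℤ_[p] L) := inferInstanceAs (IsLocalRing (ringOfInt p L))
  finite_residueField_of_isIntegralClosure_padicInt p L (integralClosure ℤ_[p] L)

instance : Module.Finite ℤ_[p] (ringOfInt p L) :=
  letI := padicIntAlgebra p L
  have : IsScalarTower ℤ_[p] ℚ_[p] L := .of_algebraMap_eq fun _ ↦ rfl
  IsIntegralClosure.finite ℤ_[p] ℚ_[p] L (integralClosure ℤ_[p] L)

end Ring

section Extension

variable [Algebra K L] [IsScalarTower ℚ_[p] K L]

/-- The inclusion of the rings of integers of an extension `L/K` over `ℚ_p`. -/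
noncomputable instance ringOfIntExtensionAlgebra : Algebra (ringOfInt p K) (ringOfInt p L) :=
  ((algebraMap K L).restrict (ringOfInt p K) (ringOfInt p L) fun _ ↦
    map_mem_ringOfInt p (IsScalarTower.toAlgHom ℚ_[p] K L)).toAlgebra

instance : IsScalarTower (ringOfInt p K) (ringOfInt p L) L := .of_algebraMap_eq fun _ ↦ rfl

instance : IsScalarTower ℤ_[p] (ringOfInt p K) (ringOfInt p L) := .of_algebraMap_eq fun z ↦
  Subtype.ext (IsScalarTower.algebraMap_apply ℚ_[p] K L z)

instance : FaithfulSMul (ringOfInt p K) (ringOfInt p L) :=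
  (faithfulSMul_iff_algebraMap_injective _ _).2 fun _ _ h ↦
    Subtype.ext ((algebraMap K L).injective (congrArg Subtype.val h))

instance [FiniteDimensional ℚ_[p] L] : Module.Finite (ringOfInt p K) (ringOfInt p L) :=
  .of_restrictScalars_finite ℤ_[p] _ _

instance : IsInvariantSubring (L ≃ₐ[K] L) (ringOfInt p L) where
  smul_mem σ _ := map_mem_ringOfInt p (σ.restrictScalars ℚ_[p] : L →ₐ[ℚ_[p]] L)

instance [FiniteDimensional ℚ_[p] L] [IsGalois K L] :
    IsGaloisGroup (L ≃ₐ[K] L) (ringOfInt p K) (ringOfInt p L) :=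
  have : FiniteDimensional ℚ_[p] K := .left ℚ_[p] K L
  have : SMulDistribClass (L ≃ₐ[K] L) (ringOfInt p L) L := ⟨fun σ x y ↦ map_mul σ (x : L) y⟩
  .of_isFractionRing _ _ _ K L

theorem ramSet_eq_coe_lowerRamificationGroup [FiniteDimensional ℚ_[p] L] (i : ℕ) :
    ramSet p K L i = lowerRamificationGroup (L ≃ₐ[K] L) (ringOfInt p L) i := by
  ext σ
  refine forall_congr' fun x ↦ ?_
  rw [maxIdeal, jacobson_eq_maximalIdeal ⊥ bot_ne_top]
  refine ⟨?_, fun h ↦ ⟨_, h, rfl⟩⟩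
  rintro ⟨y, hy, hyx⟩
  rwa [← Subtype.ext (a1 := y) (a2 := σ • x - x) hyx]

theorem isRamJump_iff_isLowerRamificationJump [FiniteDimensional ℚ_[p] L] {i : ℕ} :
    IsRamJump p K L i ↔ IsLowerRamificationJump (L ≃ₐ[K] L) (ringOfInt p L) i := by
  rw [IsRamJump, ramSet_eq_coe_lowerRamificationGroup, ramSet_eq_coe_lowerRamificationGroup,
    SetLike.coe_injective.ne_iff, IsLowerRamificationJump]

end Extension

end RingOfInt

theorem jumps_of_tower_general (A : Type*) {B C G Q H : Type*}
    [CommRing A] [IsLocalRing A] [PerfectField (IsLocalRing.ResidueField A)]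
    [CommRing B] [IsDomain B] [IsDiscreteValuationRing B]
    [CommRing C] [IsDomain C] [IsDiscreteValuationRing C]
    [Algebra A B] [Algebra B C] [Algebra A C] [IsScalarTower A B C]
    [FaithfulSMul A B] [FaithfulSMul B C] [Module.Finite A B] [Module.Finite B C]
    [Group G] [MulSemiringAction G C] [IsGaloisGroup G A C]
    [Group Q] [MulSemiringAction Q B] [IsGaloisGroup Q A B]
    [Group H] [MulSemiringAction H C] [IsGaloisGroup H B C]
    {ι : H →* G} (hι : ∀ h (c : C), ι h • c = h • c) {t : ℕ}
    (hQ : ∀ j, IsLowerRamificationJump Q B j → j ≤ t)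
    (hH : ∀ j, IsLowerRamificationJump H C j → t < j) :
    (∀ j, IsLowerRamificationJump G C j ↔
        IsLowerRamificationJump Q B j ∨ IsLowerRamificationJump H C j) ∧
      ∀ j, t + 1 ≤ j →
        lowerRamificationGroup G C j = (lowerRamificationGroup H C j).map ι := by
  have : FaithfulSMul A C := .trans A B C
  have : FaithfulSMul H C := IsGaloisGroup.faithful B
  have : FaithfulSMul Q B := IsGaloisGroup.faithful A
  have : PerfectField (IsLocalRing.ResidueField B) :=
    Algebra.IsAlgebraic.perfectField (IsLocalRing.ResidueField A)
  have : Module.Finite A C := .trans B C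
  have : Finite G := IsGaloisGroup.finite G A C
  have : Finite Q := IsGaloisGroup.finite Q A B
  have : Finite H := IsGaloisGroup.finite H B C
  obtain ⟨x, hx⟩ := exists_adjoin_eq_top_of_isSeparable_residueField A C
  have hH₀ (s : ℕ) (hs : s ≤ t + 1) : lowerRamificationGroup H C 0 ≤ lowerRamificationGroup H C s :=
    (lowerRamificationGroup_eq_of_forall_not_isLowerRamificationJump s.zero_le
      fun k _ hks hk ↦ (hH k hk).not_ge (Nat.lt_succ_iff.1 (hks.trans_le hs))).le
  have hQ₁ : lowerRamificationGroup Q B (t + 1) = ⊥ :=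
    lowerRamificationGroup_eq_bot_of_forall_not_isLowerRamificationJump
      fun k htk hk ↦ (hQ k hk).not_gt htk
  have hrange (j : ℕ) (hj : t + 1 ≤ j) : lowerRamificationGroup G C j ≤ ι.range := fun g hg ↦ by
    rw [← restrictHom_eq_one_iff (A := A) (B := B) (Q := Q) hι, ← Subgroup.mem_bot, ← hQ₁,
      ← map_restrictHom_lowerRamificationGroup_of_le hx hι (hH₀ _ le_rfl)]
    exact Subgroup.mem_map_of_mem _ (lowerRamificationGroup_antitone hj hg)
  refine ⟨fun j ↦ ?_, fun j hj ↦ lowerRamificationGroup_eq_map_of_le_range hι (hrange j hj)⟩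
  rcases le_or_gt j t with hj | hj
  · rw [isLowerRamificationJump_iff_of_le (B := B) (Q := Q) hx hι (hH₀ _ (Nat.succ_le_succ hj)),
      or_iff_left fun h ↦ (hH j h).not_ge hj]
  · rw [isLowerRamificationJump_iff_of_le_range hι (hrange j hj),
      or_iff_right fun h ↦ (hQ j h).not_gt hj]

/-- Let `K ⊆ L ⊆ M` be a tower of finite extensions of `ℚ_p` with `M/K` and `L/K` Galois.
If `M/L` has ramification jumps `t₁ < ... < t_n`, and `L/K` has a unique jump `t` with
`t < t₁`, then the jumps of `M/K` are exactly `t, t₁, ..., t_n`, and for every `j ≥ t + 1`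
one has `Gal(M/K)_j = Gal(M/L)_j` (via restriction of scalars). -/
theorem jumps_of_tower (p : ℕ) [Fact p.Prime] (K L M : Type*) [Field K] [Field L] [Field M]
    [Algebra ℚ_[p] K] [Algebra ℚ_[p] L] [Algebra ℚ_[p] M]
    [Algebra K L] [Algebra L M] [Algebra K M] [IsScalarTower K L M]
    [IsScalarTower ℚ_[p] K L] [IsScalarTower ℚ_[p] L M]
    [FiniteDimensional ℚ_[p] M]
    [IsGalois K M] [IsGalois K L] [IsGalois L M]
    (n : ℕ) (ts : Fin n → ℕ) (hts : StrictMono ts)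
    (hML : ∀ j : ℕ, IsRamJump p L M j ↔ ∃ i, ts i = j)
    (t : ℕ) (ht : HasUniqueRamJump p K L t)
    (htlt : ∀ i, t < ts i) :
    (∀ j : ℕ, IsRamJump p K M j ↔ (j = t ∨ ∃ i, ts i = j)) ∧
      ∀ j : ℕ, t + 1 ≤ j →
        ramSet p K M j =
          (fun σ : M ≃ₐ[L] M => AlgEquiv.restrictScalars K σ) '' ramSet p L M j := by
  have : FiniteDimensional ℚ_[p] L := .left ℚ_[p] L M
  have : FiniteDimensional ℚ_[p] K := .left ℚ_[p] K L
  have : IsScalarTower ℚ_[p] K M := .of_algebraMap_eq fun q ↦ by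
    rw [IsScalarTower.algebraMap_apply ℚ_[p] L M, IsScalarTower.algebraMap_apply ℚ_[p] K L,
      ← IsScalarTower.algebraMap_apply K L M]
  have : IsScalarTower (ringOfInt p K) (ringOfInt p L) (ringOfInt p M) :=
    .of_algebraMap_eq fun x ↦ Subtype.ext (IsScalarTower.algebraMap_apply K L M (x : K))
  have hKL (j : ℕ) : IsRamJump p K L j ↔ j = t := ⟨ht.2 j, fun h ↦ h ▸ ht.1⟩
  obtain ⟨hjumps, hgroups⟩ := jumps_of_tower_general (ringOfInt p K) (B := ringOfInt p L)
    (C := ringOfInt p M) (G := M ≃ₐ[K] M) (Q := L ≃ₐ[K] L) (H := M ≃ₐ[L] M)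
    (ι := AlgEquiv.restrictScalarsHom K) (t := t) (fun _ _ ↦ rfl)
    (fun j hj ↦ ((hKL j).1 ((isRamJump_iff_isLowerRamificationJump p).2 hj)).le)
    (fun j hj ↦ by
      obtain ⟨i, rfl⟩ := (hML j).1 ((isRamJump_iff_isLowerRamificationJump p).2 hj)
      exact htlt i)
  simp only [← isRamJump_iff_isLowerRamificationJump] at hjumps
  refine ⟨fun j ↦ by rw [hjumps, hKL, hML], fun j hj ↦ ?_⟩
  rw [ramSet_eq_coe_lowerRamificationGroup, ramSet_eq_coe_lowerRamificationGroup, hgroups j hj]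
  rfl
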